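/- Let X be a complex Banach space with dim X > 2 and let 𝒩 be a non-trivial nest on X with {0} ⊊ {0}_+. Then for every n ≥ 2 and every Lie n-derivation L : Alg 𝒩 → B(X) there exist a derivation D : Alg 𝒩 → B(X) and a linear map H : Alg 𝒩 → ℂI vanishing on every (n−1)-th commutator p_n(A_1,…,A_n) with A_1,…,A_n ∈ Alg 𝒩 such that L = D + H; moreover, if L is continuous then D and H can be chosen continuous. -/

import Mathlib

open scoped Classical

set_option synthInstance.maxHeartbeats 1000000
set_option maxHeartbeats 1000000

noncomputable section

/-- The `(n-1)`-th commutator polynomial `p_n(x_1, …, x_n)`, defined recursively by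
`p_1(x_1) = x_1` and `p_k(x_1, …, x_k) = [p_{k-1}(x_1, …, x_{k-1}), x_k]`. -/
def commPoly {A : Type*} [NonUnitalNonAssocRing A] : (n : ℕ) → (Fin n → A) → A
  | 0, _ => 0
  | 1, a => a 0
  | n + 2, a =>
      commPoly (n + 1) (fun i => a i.castSucc) * a (Fin.last (n + 1)) -
        a (Fin.last (n + 1)) * commPoly (n + 1) (fun i => a i.castSucc)

/-- A nest of closed subspaces of `X`: it contains `{0}` and `X`, is totally ordered by
inclusion, is closed under arbitrary intersections, and contains the norm-closed linear
span of the union of any subfamily. -/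
structure IsNest {X : Type*} [NormedAddCommGroup X] [NormedSpace ℂ X]
    (𝒩 : Set (Submodule ℂ X)) : Prop where
  closed : ∀ N ∈ 𝒩, IsClosed (N : Set X)
  bot_mem : (⊥ : Submodule ℂ X) ∈ 𝒩
  top_mem : (⊤ : Submodule ℂ X) ∈ 𝒩
  total : ∀ N₁ ∈ 𝒩, ∀ N₂ ∈ 𝒩, N₁ ≤ N₂ ∨ N₂ ≤ N₁
  sInf_mem : ∀ S ⊆ 𝒩, sInf S ∈ 𝒩
  closure_sSup_mem : ∀ S ⊆ 𝒩, (sSup S).topologicalClosure ∈ 𝒩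

/-- The nest algebra `Alg 𝒩` of all bounded operators leaving every member of `𝒩`
invariant. -/
def nestAlgebra {X : Type*} [NormedAddCommGroup X] [NormedSpace ℂ X]
    (𝒩 : Set (Submodule ℂ X)) : Subalgebra ℂ (X →L[ℂ] X) where
  carrier := {T : X →L[ℂ] X | ∀ N ∈ 𝒩, ∀ x ∈ N, T x ∈ N}
  mul_mem' := fun {a b} ha hb N hN x hx => ha N hN _ (hb N hN x hx)
  one_mem' := fun N _ x hx => hx
  add_mem' := fun {a b} ha hb N hN x hx => N.add_mem (ha N hN x hx) (hb N hN x hx)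
  zero_mem' := fun N _ _ _ => N.zero_mem
  algebraMap_mem' := fun r N hN x hx => by
    simpa [Algebra.algebraMap_eq_smul_one] using N.smul_mem r hx

/-- `{0}₊` : the intersection of all members of `𝒩` different from `{0}`. -/
def nestZeroPlus {X : Type*} [NormedAddCommGroup X] [NormedSpace ℂ X]
    (𝒩 : Set (Submodule ℂ X)) : Submodule ℂ X :=
  sInf {N | N ∈ 𝒩 ∧ N ≠ (⊥ : Submodule ℂ X)}

/-- `L` is a Lie `n`-derivation on the subalgebra `𝒜` of `B`:
`L(p_n(a_1,…,a_n)) = ∑_k p_n(a_1, …, a_{k-1}, L(a_k), a_{k+1}, …, a_n)`. -/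
def IsLieNDeriv {B : Type*} [Ring B] [Algebra ℂ B] (𝒜 : Subalgebra ℂ B)
    (n : ℕ) (L : ↥𝒜 →ₗ[ℂ] B) : Prop :=
  ∀ a : Fin n → ↥𝒜,
    L (commPoly n a) =
      ∑ k : Fin n, commPoly n (Function.update (fun i => ((a i : B))) k (L (a k)))

/-- `D` is an (associative) derivation on the subalgebra `𝒜` of `B`. -/
def IsDerivOn {B : Type*} [Ring B] [Algebra ℂ B] (𝒜 : Subalgebra ℂ B)
    (D : ↥𝒜 →ₗ[ℂ] B) : Prop :=
  ∀ a b : ↥𝒜, D (a * b) = D a * (b : B) + (a : B) * D b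

/-!
A nonzero vector `x` of `{0}₊` and a functional `f` with `f x = 1` give a rank-one idempotent
`p = f ⊗ x` for which `p B(X) p = ℂ p` and the whole right ideal `p B(X)` lies in `Alg 𝒩`. As
`B(X)` is prime, an operator `y` with `p z y = 0` for all `z` vanishes, so an identity in `B(X)`
need only be tested after multiplication by `p B(X)` from the left.

Subtracting the inner derivation by `[p, L p]` one may assume that `p` commutes with `L p`.
Feeding `p_n(u, p, …, p) = (-1)^(n-1) u` with `u ∈ p B(X) (1 - p)` to `L` then shows that `L p`
commutes with every such `u`, hence is a scalar. Now all entries `p` in a commutator can be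
ignored: `L` preserves both off-diagonal Peirce components, and
`L [u, t] = [L u, t] + [u, L t]`. Writing `p y p = τ(y) p`, the map `δ t = L t - τ(L t) 1`
therefore satisfies `δ(r t) = δ(r) t + r δ(t)` for `r ∈ p B(X)`, and testing against these `r`
shows that `δ` is a derivation. The remaining scalar part is itself a Lie `n`-derivation,
being a difference of two, and a Lie `n`-derivation with central values kills commutators.
-/

section CommPoly

attribute [local instance] LieRing.ofAssociativeRing

variable {R : Type*} [Ring R]

lemma commPoly_add_two (n : ℕ) (a : Fin (n + 2) → R) :
    commPoly (n + 2) a = ⁅commPoly (n + 1) (Fin.init a), a (Fin.last (n + 1))⁆ := rfl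

lemma commPoly_eq_iterate_lie {p : R} (n : ℕ) {a : Fin (n + 1) → R}
    (ha : ∀ i, a (Fin.succ i) = p) : commPoly (n + 1) a = (⁅·, p⁆)^[n] (a 0) := by
  induction n with
  | zero => rfl
  | succ n ih =>
    rw [commPoly_add_two, ih fun i => ha i.castSucc, Function.iterate_succ_apply',
      ← Fin.succ_last, ha]
    rfl

lemma sum_commPoly_update_add_two (n : ℕ) (a b : Fin (n + 2) → R) :
    ∑ k, commPoly (n + 2) (Function.update a k (b k)) =
      ⁅∑ k, commPoly (n + 1) (Function.update (Fin.init a) k (Fin.init b k)),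
        a (Fin.last (n + 1))⁆ +
      ⁅commPoly (n + 1) (Fin.init a), b (Fin.last (n + 1))⁆ := by
  simp only [Fin.sum_univ_castSucc (n := n + 1), commPoly_add_two, Fin.init_update_castSucc,
    Fin.init_update_last, Function.update_self, Function.update_of_ne (Fin.castSucc_ne_last _).symm,
    sum_lie]
  rfl

lemma commPoly_update_sub (n : ℕ) (a : Fin n → R) (k : Fin n) (x y : R) :
    commPoly n (Function.update a k (x - y)) =
      commPoly n (Function.update a k x) - commPoly n (Function.update a k y) := by
  match n with
  | 0 => exact k.elim0
  | 1 =>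
    obtain rfl : k = 0 := Fin.fin_one_eq_zero k
    simp [commPoly]
  | n + 2 =>
    simp only [commPoly_add_two, Ring.lie_def]
    induction k using Fin.lastCases with
    | last =>
      simp only [Fin.init_update_last, Function.update_self]
      noncomm_ring
    | cast j =>
      simp only [Fin.init_update_castSucc, commPoly_update_sub (n + 1),
        Function.update_of_ne (Fin.castSucc_ne_last j).symm]
      noncomm_ring

lemma commPoly_update_of_forall_commute (n : ℕ) (a : Fin (n + 2) → R) (k : Fin (n + 2)) {c : R}
    (hc : ∀ b, Commute c b) : commPoly (n + 2) (Function.update a k c) = 0 := by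
  rw [commPoly_add_two]
  induction k using Fin.lastCases with
  | last => rw [Function.update_self, (hc _).symm.lie_eq]
  | cast j =>
    rw [Fin.init_update_castSucc]
    cases n with
    | zero =>
      obtain rfl : j = 0 := Fin.fin_one_eq_zero j
      exact (hc _).lie_eq
    | succ n => rw [commPoly_update_of_forall_commute n _ j hc, zero_lie]

lemma sum_commPoly_update_of_forall_commute {p q : R} (hq : ∀ b, Commute q b) (n : ℕ)
    {a b : Fin (n + 1) → R} (ha : ∀ i, a (Fin.succ i) = p) (hb : ∀ i, b (Fin.succ i) = q) :
    ∑ k, commPoly (n + 1) (Function.update a k (b k)) = (⁅·, p⁆)^[n] (b 0) := by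
  induction n with
  | zero => simp [commPoly]
  | succ n ih =>
    rw [sum_commPoly_update_add_two, ih (fun i => ha i.castSucc) fun i => hb i.castSucc,
      ← Fin.succ_last, ha, hb, Function.iterate_succ_apply', (hq _).symm.lie_eq, add_zero]
    rfl

lemma iterate_lie_add_of_lie_eq {p u v : R} (hu : ⁅u, p⁆ = -u) (hv : ⁅v, p⁆ = v) (n : ℕ) :
    (⁅·, p⁆)^[n] (u + v) = (-1 : ℤ) ^ n • u + v := by
  induction n with
  | zero => simp
  | succ n ih => rw [Function.iterate_succ_apply', ih, add_lie, smul_lie, hu, hv, pow_succ]; module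

lemma sum_commPoly_update_of_lie_eq_neg {p q : R} (hpq : Commute p q) (n : ℕ)
    {a b : Fin (n + 1) → R} (ha : ∀ i, a (Fin.succ i) = p) (hb : ∀ i, b (Fin.succ i) = q)
    (h0 : ⁅a 0, p⁆ = -a 0) :
    ∑ k, commPoly (n + 1) (Function.update a k (b k)) =
      (⁅·, p⁆)^[n] (b 0) - ((-1) ^ n * n : ℤ) • ⁅a 0, q⁆ := by
  induction n with
  | zero => simp [commPoly]
  | succ n ih =>
    have hinit : Fin.init a 0 = a 0 := rfl
    have hiter : (⁅·, p⁆)^[n] (a 0) = (-1 : ℤ) ^ n • a 0 := by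
      simpa using iterate_lie_add_of_lie_eq h0 (zero_lie p) n
    have hq : ⁅⁅a 0, q⁆, p⁆ = -⁅a 0, q⁆ := by
      rw [lie_lie, hpq.symm.lie_eq, lie_zero, h0, lie_neg, zero_sub, lie_skew]
    rw [sum_commPoly_update_add_two,
      ih (fun i => ha i.castSucc) (fun i => hb i.castSucc) h0,
      commPoly_eq_iterate_lie n fun i => ha i.castSucc, hinit, hiter, ← Fin.succ_last, ha, hb,
      sub_lie, smul_lie, smul_lie, hq, Function.iterate_succ_apply', pow_succ, Nat.cast_succ]
    change ⁅(⁅·, p⁆)^[n] (b 0), p⁆ - _ + _ = _ - _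
    module

end CommPoly

section Peirce

variable {R : Type*} [Ring R] {p : R}

/-- The projection `x ↦ p x (1 - p)` onto the off-diagonal Peirce component `p R (1 - p)` of an
idempotent `p`. -/
def peirceUpper (p : R) : R →+ R :=
  (AddMonoidHom.mulRight (1 - p)).comp (AddMonoidHom.mulLeft p)

/-- The projection `x ↦ (1 - p) x p` onto the off-diagonal Peirce component `(1 - p) R p` of an
idempotent `p`. -/
def peirceLower (p : R) : R →+ R :=
  (AddMonoidHom.mulRight p).comp (AddMonoidHom.mulLeft (1 - p))

lemma peirceUpper_apply (p x : R) : peirceUpper p x = p * x * (1 - p) := rfl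

lemma peirceLower_apply (p x : R) : peirceLower p x = (1 - p) * x * p := rfl

lemma mul_peirceUpper (hp : IsIdempotentElem p) (x : R) :
    p * peirceUpper p x = peirceUpper p x := by
  simp only [peirceUpper_apply, ← mul_assoc, hp.eq]

lemma peirceUpper_mul (hp : IsIdempotentElem p) (x : R) : peirceUpper p x * p = 0 := by
  rw [peirceUpper_apply, mul_assoc, hp.one_sub_mul_self, mul_zero]

lemma mul_peirceLower (hp : IsIdempotentElem p) (x : R) : p * peirceLower p x = 0 := by
  rw [peirceLower_apply, ← mul_assoc, ← mul_assoc, hp.mul_one_sub_self, zero_mul, zero_mul]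

lemma peirceLower_mul (hp : IsIdempotentElem p) (x : R) :
    peirceLower p x * p = peirceLower p x := by
  rw [peirceLower_apply, mul_assoc, hp.eq]

lemma peirceUpper_mul_peirceUpper (hp : IsIdempotentElem p) (x y : R) :
    peirceUpper p x * peirceUpper p y = 0 := by
  rw [← mul_peirceUpper hp y, ← mul_assoc, peirceUpper_mul hp, zero_mul]

lemma peirceUpper_mul_peirceLower (hp : IsIdempotentElem p) (x y : R) :
    peirceUpper p x * peirceLower p y = peirceUpper p x * (y * p) := by
  rw [peirceLower_apply, mul_assoc (1 - p), sub_mul, one_mul, mul_sub, ← mul_assoc _ p,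
    peirceUpper_mul hp, zero_mul, sub_zero]

lemma peirceUpper_eq_self {x : R} (hpx : p * x = x) (hxp : x * p = 0) : peirceUpper p x = x := by
  rw [peirceUpper_apply, hpx, mul_sub, mul_one, hxp, sub_zero]

lemma peirceLower_eq_self {x : R} (hpx : p * x = 0) (hxp : x * p = x) : peirceLower p x = x := by
  rw [peirceLower_apply, sub_mul, one_mul, hpx, sub_zero, hxp]

lemma peirceUpper_peirceUpper (hp : IsIdempotentElem p) (x : R) :
    peirceUpper p (peirceUpper p x) = peirceUpper p x :=
  peirceUpper_eq_self (mul_peirceUpper hp x) (peirceUpper_mul hp x)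

lemma peirceLower_peirceLower (hp : IsIdempotentElem p) (x : R) :
    peirceLower p (peirceLower p x) = peirceLower p x :=
  peirceLower_eq_self (mul_peirceLower hp x) (peirceLower_mul hp x)

lemma peirceUpper_peirceLower (hp : IsIdempotentElem p) (x : R) :
    peirceUpper p (peirceLower p x) = 0 := by
  rw [peirceUpper_apply, mul_peirceLower hp, zero_mul]

lemma peirceLower_peirceUpper (hp : IsIdempotentElem p) (x : R) :
    peirceLower p (peirceUpper p x) = 0 := by
  rw [peirceLower_apply, mul_assoc, peirceUpper_mul hp, mul_zero]

lemma lie_peirceUpper (hp : IsIdempotentElem p) (x : R) :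
    ⁅peirceUpper p x, p⁆ = -peirceUpper p x := by
  rw [Ring.lie_def, peirceUpper_mul hp, mul_peirceUpper hp, zero_sub]

lemma lie_peirceLower (hp : IsIdempotentElem p) (x : R) :
    ⁅peirceLower p x, p⁆ = peirceLower p x := by
  rw [Ring.lie_def, peirceLower_mul hp, mul_peirceLower hp, sub_zero]

lemma lie_eq_neg_peirceUpper_add_peirceLower (p x : R) :
    ⁅x, p⁆ = -peirceUpper p x + peirceLower p x := by
  rw [Ring.lie_def, peirceUpper_apply, peirceLower_apply]
  noncomm_ring

lemma iterate_lie_peirce (hp : IsIdempotentElem p) (n : ℕ) (x y : R) :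
    (⁅·, p⁆)^[n] (peirceUpper p x + peirceLower p y) =
      (-1 : ℤ) ^ n • peirceUpper p x + peirceLower p y :=
  iterate_lie_add_of_lie_eq (lie_peirceUpper hp x) (lie_peirceLower hp y) n

lemma iterate_lie_peirceUpper (hp : IsIdempotentElem p) (n : ℕ) (x : R) :
    (⁅·, p⁆)^[n] (peirceUpper p x) = (-1 : ℤ) ^ n • peirceUpper p x := by
  simpa using iterate_lie_peirce hp n x 0

lemma iterate_lie_peirceLower (hp : IsIdempotentElem p) (n : ℕ) (x : R) :
    (⁅·, p⁆)^[n] (peirceLower p x) = peirceLower p x := by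
  simpa using iterate_lie_peirce hp n 0 x

lemma iterate_lie_succ (hp : IsIdempotentElem p) (n : ℕ) (x : R) :
    (⁅·, p⁆)^[n + 1] x = (-1 : ℤ) ^ (n + 1) • peirceUpper p x + peirceLower p x := by
  rw [Function.iterate_succ_apply, lie_eq_neg_peirceUpper_add_peirceLower, ← map_neg,
    iterate_lie_peirce hp, map_neg, pow_succ]
  module

end Peirce

section LieNDeriv

variable {B : Type*} [Ring B] [Algebra ℂ B] {𝒜 : Subalgebra ℂ B}

lemma coe_commPoly (n : ℕ) (a : Fin n → 𝒜) :
    ((commPoly n a : 𝒜) : B) = commPoly n fun i => (a i : B) := by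
  induction n with
  | zero => rfl
  | succ n ih =>
    cases n with
    | zero => rfl
    | succ n => simp only [commPoly, AddSubgroupClass.coe_sub, MulMemClass.coe_mul, ih]

lemma IsDerivOn.map_lie {D : 𝒜 →ₗ[ℂ] B} (hD : IsDerivOn 𝒜 D) (a b : 𝒜) :
    D ⁅a, b⁆ = ⁅D a, (b : B)⁆ + ⁅(a : B), D b⁆ := by
  simp only [Ring.lie_def, map_sub, hD a b, hD b a]
  abel

lemma IsDerivOn.add {D E : 𝒜 →ₗ[ℂ] B} (hD : IsDerivOn 𝒜 D) (hE : IsDerivOn 𝒜 E) :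
    IsDerivOn 𝒜 (D + E) := by
  intro a b
  simp only [LinearMap.add_apply, hD a b, hE a b]
  noncomm_ring

lemma IsDerivOn.isLieNDeriv {D : 𝒜 →ₗ[ℂ] B} (hD : IsDerivOn 𝒜 D) (n : ℕ) :
    IsLieNDeriv 𝒜 n D := by
  match n with
  | 0 => intro a; simp [commPoly]
  | 1 => intro a; simp [commPoly]
  | n + 2 =>
    intro a
    have ih := hD.isLieNDeriv (n + 1) (Fin.init a)
    rw [sum_commPoly_update_add_two n _ fun k => D (a k), commPoly_add_two, hD.map_lie, ih,
      coe_commPoly]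
    rfl

lemma IsLieNDeriv.sub {n : ℕ} {L M : 𝒜 →ₗ[ℂ] B} (hL : IsLieNDeriv 𝒜 n L)
    (hM : IsLieNDeriv 𝒜 n M) : IsLieNDeriv 𝒜 n (L - M) := by
  intro a
  simp only [LinearMap.sub_apply, commPoly_update_sub, Finset.sum_sub_distrib, ← hL a, ← hM a]

/-- The inner derivation `t ↦ [t, z]` of `𝒜` into `B` defined by an element `z` of `B`. -/
def innerDeriv (𝒜 : Subalgebra ℂ B) (z : B) : 𝒜 →ₗ[ℂ] B :=
  (LinearMap.mulRight ℂ z - LinearMap.mulLeft ℂ z) ∘ₗ 𝒜.val.toLinearMap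

lemma innerDeriv_apply (z : B) (t : 𝒜) : innerDeriv 𝒜 z t = t * z - z * t := rfl

lemma isDerivOn_innerDeriv (z : B) : IsDerivOn 𝒜 (innerDeriv 𝒜 z) := by
  intro a b
  simp only [innerDeriv_apply, MulMemClass.coe_mul]
  noncomm_ring

variable {L : 𝒜 →ₗ[ℂ] B} {p : 𝒜} {m : ℕ}

lemma IsLieNDeriv.map_commPoly_eq_zero (hL : IsLieNDeriv 𝒜 (m + 2) L)
    (hc : ∀ a b, Commute (L a) b) (a : Fin (m + 2) → 𝒜) : L (commPoly (m + 2) a) = 0 := by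
  rw [hL a]
  exact Finset.sum_eq_zero fun k _ => commPoly_update_of_forall_commute _ _ _ (hc (a k))

lemma IsLieNDeriv.map_iterate_lie_of_lie_eq_neg (hL : IsLieNDeriv 𝒜 (m + 1) L)
    (hp : Commute (p : B) (L p)) {t : 𝒜} (ht : ⁅(t : B), (p : B)⁆ = -t) :
    L ((⁅·, p⁆)^[m] t) =
      (⁅·, (p : B)⁆)^[m] (L t) - ((-1) ^ m * m : ℤ) • ⁅(t : B), L p⁆ := by
  let a : Fin (m + 1) → 𝒜 := Fin.cons t fun _ => p
  have h := hL a
  rw [commPoly_eq_iterate_lie m (a := a) (p := p) fun _ => rfl] at h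
  exact h.trans (sum_commPoly_update_of_lie_eq_neg hp m (fun _ => rfl) (fun _ => rfl) ht)

lemma IsLieNDeriv.map_lie_iterate_lie (hL : IsLieNDeriv 𝒜 (m + 2) L)
    (hp : ∀ b, Commute (L p) b) (t s : 𝒜) :
    L ⁅(⁅·, p⁆)^[m] t, s⁆ =
      ⁅(⁅·, (p : B)⁆)^[m] (L t), (s : B)⁆ + ⁅(⁅·, (p : B)⁆)^[m] (t : B), L s⁆ := by
  let a : Fin (m + 1) → 𝒜 := Fin.cons t fun _ => p
  let b : Fin (m + 2) → 𝒜 := Fin.snoc a s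
  have h := hL b
  rw [commPoly_add_two, sum_commPoly_update_add_two m _ fun k => L (b k)] at h
  have hinit : Fin.init b = a := Fin.init_snoc _ _
  have hcoe : (Fin.init fun k => (b k : B)) = fun k => (a k : B) := by rw [← hinit]; rfl
  have hmap : (Fin.init fun k => L (b k)) = fun k => L (a k) := by rw [← hinit]; rfl
  have hlast : b (Fin.last (m + 1)) = s := Fin.snoc_last _ _
  rw [hinit, hcoe, hmap, hlast,
    sum_commPoly_update_of_forall_commute (p := (p : B)) hp m (fun _ => rfl) fun _ => rfl,
    commPoly_eq_iterate_lie m (a := a) (p := p) fun _ => rfl,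
    commPoly_eq_iterate_lie m (p := (p : B)) fun _ => rfl] at h
  exact h

end LieNDeriv

section MinimalIdempotent

attribute [local instance] LieRing.ofAssociativeRing

variable {B : Type*} [Ring B] [Algebra ℂ B] {𝒜 : Subalgebra ℂ B} {p : 𝒜} {τ : B →ₗ[ℂ] ℂ}

/-- The scalar part `t ↦ τ(L t) 1` of a linear map `L` with respect to a functional `τ`. -/
def scalarPart (τ : B →ₗ[ℂ] ℂ) (L : 𝒜 →ₗ[ℂ] B) : 𝒜 →ₗ[ℂ] B :=
  (τ ∘ₗ L).smulRight 1

lemma scalarPart_apply (τ : B →ₗ[ℂ] ℂ) (L : 𝒜 →ₗ[ℂ] B) (t : 𝒜) :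
    scalarPart τ L t = τ (L t) • (1 : B) := rfl

/-- `p` is a minimal idempotent of the prime algebra `B`, in the sense that its corner `p B p` is
`ℂ p`, and the whole right ideal `p B` lies in `𝒜`. The functional `τ` is the coordinate of the
corner: `p y p = τ(y) p`. -/
structure IsMinimalIdempotent (𝒜 : Subalgebra ℂ B) (p : 𝒜) (τ : B →ₗ[ℂ] ℂ) : Prop where
  prime : ∀ a b : B, (∀ z, a * z * b = 0) → a = 0 ∨ b = 0
  idem : IsIdempotentElem p
  ne_zero : p ≠ 0
  corner : ∀ y : B, (p : B) * y * p = τ y • (p : B)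
  mul_mem : ∀ y : B, (p : B) * y ∈ 𝒜

lemma coe_peirceUpper (p t : 𝒜) : (peirceUpper p t : 𝒜) = peirceUpper (p : B) t := rfl

lemma coe_peirceLower (p t : 𝒜) : (peirceLower p t : 𝒜) = peirceLower (p : B) t := rfl

namespace IsMinimalIdempotent

lemma coe_idem (h : IsMinimalIdempotent 𝒜 p τ) : IsIdempotentElem (p : B) :=
  congrArg Subtype.val h.idem

lemma tau_eq_zero (h : IsMinimalIdempotent 𝒜 p τ) {y : B} (hy : (p : B) * y * p = 0) :
    τ y = 0 := by
  rw [h.corner] at hy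
  exact (smul_eq_zero.mp hy).resolve_right (by exact_mod_cast h.ne_zero)

lemma eq_zero_of_forall_mul_mul (h : IsMinimalIdempotent 𝒜 p τ) {y : B}
    (hy : ∀ z, (p : B) * z * y = 0) : y = 0 :=
  (h.prime p y hy).resolve_left (by exact_mod_cast h.ne_zero)

lemma mul_eq_smul_add_peirceUpper (h : IsMinimalIdempotent 𝒜 p τ) (y : B) :
    (p : B) * y = τ y • (p : B) + peirceUpper (p : B) y := by
  rw [← h.corner, peirceUpper_apply]
  noncomm_ring

lemma eq_zero_or_eq_zero_of_commute (h : IsMinimalIdempotent 𝒜 p τ) {x y : B}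
    (hc : Commute (peirceUpper (p : B) x) (peirceLower (p : B) y)) :
    peirceUpper (p : B) x = 0 ∨ peirceLower (p : B) y = 0 := by
  have hvu : peirceLower (p : B) y * peirceUpper (p : B) x = 0 := by
    rw [← hc.eq, ← peirceLower_mul h.coe_idem, ← mul_assoc, hc.eq, mul_assoc,
      peirceUpper_mul h.coe_idem, mul_zero]
  refine (h.prime _ _ fun z => ?_).symm
  calc peirceLower (p : B) y * z * peirceUpper (p : B) x
      = peirceLower (p : B) y * (p * z * p) * peirceUpper (p : B) x := by
        rw [← mul_assoc, ← mul_assoc, peirceLower_mul h.coe_idem, mul_assoc _ (p : B),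
          mul_peirceUpper h.coe_idem]
    _ = τ z • (peirceLower (p : B) y * peirceUpper (p : B) x) := by
        rw [h.corner, mul_smul_comm, peirceLower_mul h.coe_idem, smul_mul_assoc]
    _ = 0 := by rw [hvu, smul_zero]

variable {L : 𝒜 →ₗ[ℂ] B} {m : ℕ}

lemma commute_peirceUpper_map (h : IsMinimalIdempotent 𝒜 p τ) (hL : IsLieNDeriv 𝒜 (m + 2) L)
    (hp : Commute (p : B) (L p)) (t : 𝒜) : Commute (peirceUpper (p : B) t) (L p) := by
  have hup : peirceUpper (p : B) ⁅peirceUpper (p : B) t, L p⁆ = ⁅peirceUpper (p : B) t, L p⁆ := by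
    refine peirceUpper_eq_self ?_ ?_
    · rw [Ring.lie_def, mul_sub, ← mul_assoc, ← mul_assoc, hp.eq, mul_assoc (L p),
        mul_peirceUpper h.coe_idem]
    · rw [Ring.lie_def, sub_mul, mul_assoc, mul_assoc, peirceUpper_mul h.coe_idem, ← hp.eq,
        ← mul_assoc, peirceUpper_mul h.coe_idem, zero_mul, mul_zero, sub_zero]
  have hLu := congrArg (peirceUpper (p : B)) <|
    hL.map_iterate_lie_of_lie_eq_neg hp (t := peirceUpper p t) (lie_peirceUpper h.coe_idem _)
  rw [iterate_lie_peirceUpper h.idem, iterate_lie_succ h.coe_idem, coe_peirceUpper, map_zsmul,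
    map_sub, map_add, map_zsmul, map_zsmul, map_zsmul, peirceUpper_peirceUpper h.coe_idem,
    peirceUpper_peirceLower h.coe_idem, add_zero, hup, eq_comm, sub_eq_self] at hLu
  have := IsAddTorsionFree.of_isTorsionFree ℂ B
  rw [commute_iff_lie_eq]
  exact (smul_eq_zero.mp hLu).resolve_left
    (mul_ne_zero (pow_ne_zero _ (by decide)) (by positivity))

lemma map_eq_smul_one (h : IsMinimalIdempotent 𝒜 p τ) (hL : IsLieNDeriv 𝒜 (m + 2) L)
    (hp : Commute (p : B) (L p)) : L p = τ (L p) • (1 : B) := by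
  have hpL : (p : B) * L p = τ (L p) • (p : B) := by
    rw [← h.corner, mul_assoc, ← hp.eq, ← mul_assoc, h.coe_idem]
  refine sub_eq_zero.mp (h.eq_zero_of_forall_mul_mul fun z => ?_)
  have hu : peirceUpper (p : B) z * L p = τ (L p) • peirceUpper (p : B) z := by
    have hcomm := h.commute_peirceUpper_map hL hp ⟨p * z, h.mul_mem z⟩
    have hpz : peirceUpper (p : B) (p * z) = peirceUpper (p : B) z := by
      rw [peirceUpper_apply, ← mul_assoc, h.coe_idem, peirceUpper_apply]
    rw [hpz] at hcomm
    rw [hcomm.eq, ← mul_peirceUpper h.coe_idem, ← mul_assoc, ← hp.eq, hpL, smul_mul_assoc]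
  rw [mul_sub, mul_smul_comm, mul_one, h.mul_eq_smul_add_peirceUpper z, add_mul, smul_mul_assoc,
    hpL, hu]
  module

lemma map_peirce (h : IsMinimalIdempotent 𝒜 p τ) (hL : IsLieNDeriv 𝒜 (m + 2) L)
    (hc : ∀ b, Commute (L p) b) (t : 𝒜) :
    (-1 : ℤ) ^ (m + 1) • L (peirceUpper p t) + L (peirceLower p t) =
      (-1 : ℤ) ^ (m + 1) • peirceUpper (p : B) (L t) + peirceLower (p : B) (L t) := by
  have hLt := hL.map_lie_iterate_lie hc t p
  rwa [(hc _).symm.lie_eq, add_zero, ← Function.iterate_succ_apply' (⁅·, p⁆),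
    ← Function.iterate_succ_apply' (⁅·, (p : B)⁆), iterate_lie_succ h.idem,
    iterate_lie_succ h.coe_idem, map_add, map_zsmul] at hLt

lemma peirceUpper_map_peirceUpper (h : IsMinimalIdempotent 𝒜 p τ)
    (hL : IsLieNDeriv 𝒜 (m + 2) L) (hc : ∀ b, Commute (L p) b) (t : 𝒜) :
    peirceUpper (p : B) (L (peirceUpper p t)) = L (peirceUpper p t) := by
  have := IsAddTorsionFree.of_isTorsionFree ℂ B
  have hLu := h.map_peirce hL hc (peirceUpper p t)
  have hlie := hL.map_lie_iterate_lie hc (peirceUpper p t) (peirceUpper p t)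
  rw [peirceUpper_peirceUpper h.idem, peirceLower_peirceUpper h.idem, map_zero, add_zero] at hLu
  rw [iterate_lie_peirceUpper h.idem, coe_peirceUpper, iterate_lie_peirceUpper h.coe_idem,
    smul_lie, lie_self, smul_zero, map_zero] at hlie
  rcases neg_one_pow_eq_or ℤ m with hm | hm
  · have hb := congrArg (peirceLower (p : B)) hLu
    simp only [pow_succ, hm, one_mul, neg_one_smul, map_neg, map_add,
      peirceLower_peirceUpper h.coe_idem, peirceLower_peirceLower h.coe_idem, neg_zero,
      zero_add, neg_eq_self] at hb
    simpa [pow_succ, hm, hb, eq_comm] using hLu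
  · have hsum : L (peirceUpper p t) = peirceUpper (p : B) (L (peirceUpper p t)) +
        peirceLower (p : B) (L (peirceUpper p t)) := by
      simpa [pow_succ, hm] using hLu
    have hcomm : Commute (peirceUpper (p : B) t) (peirceLower (p : B) (L (peirceUpper p t))) := by
      rw [hsum, iterate_lie_peirce h.coe_idem, hm] at hlie
      simp only [neg_one_smul, neg_lie, add_lie, lie_add] at hlie
      rw [← lie_skew (peirceUpper (p : B) t) (peirceUpper (p : B) (L _)),
        ← lie_skew (peirceLower (p : B) (L _))] at hlie
      rw [commute_iff_lie_eq, ← nsmul_eq_zero_iff_right two_ne_zero]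
      linear_combination (norm := module) hlie
    obtain hu | hb := h.eq_zero_or_eq_zero_of_commute hcomm
    · rw [show peirceUpper p t = 0 from Subtype.ext hu, map_zero, map_zero]
    · rwa [hb, add_zero, eq_comm] at hsum

lemma peirceLower_map_peirceLower (h : IsMinimalIdempotent 𝒜 p τ)
    (hL : IsLieNDeriv 𝒜 (m + 2) L) (hc : ∀ b, Commute (L p) b) (t : 𝒜) :
    peirceLower (p : B) (L (peirceLower p t)) = L (peirceLower p t) := by
  have := IsAddTorsionFree.of_isTorsionFree ℂ B
  have hLv := h.map_peirce hL hc (peirceLower p t)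
  have hlie := hL.map_lie_iterate_lie hc (peirceLower p t) (peirceLower p t)
  rw [peirceUpper_peirceLower h.idem, peirceLower_peirceLower h.idem, map_zero, smul_zero,
    zero_add] at hLv
  rw [iterate_lie_peirceLower h.idem, coe_peirceLower, iterate_lie_peirceLower h.coe_idem,
    lie_self, map_zero] at hlie
  rcases neg_one_pow_eq_or ℤ m with hm | hm
  · have ha := congrArg (peirceUpper (p : B)) hLv
    simp only [pow_succ, hm, one_mul, neg_one_smul, map_neg, map_add,
      peirceUpper_peirceLower h.coe_idem, peirceUpper_peirceUpper h.coe_idem, add_zero,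
      self_eq_neg] at ha
    simpa [ha, eq_comm] using hLv
  · have hsum : L (peirceLower p t) = peirceUpper (p : B) (L (peirceLower p t)) +
        peirceLower (p : B) (L (peirceLower p t)) := by
      simpa [pow_succ, hm] using hLv
    have hcomm : Commute (peirceUpper (p : B) (L (peirceLower p t))) (peirceLower (p : B) t) := by
      rw [hsum, iterate_lie_peirce h.coe_idem, hm] at hlie
      simp only [neg_one_smul, neg_lie, add_lie, lie_add] at hlie
      rw [← lie_skew (peirceLower (p : B) t) (peirceLower (p : B) (L _)),
        ← lie_skew (peirceLower (p : B) t) (peirceUpper (p : B) (L _))] at hlie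
      rw [commute_iff_lie_eq, ← nsmul_eq_zero_iff_right two_ne_zero]
      linear_combination (norm := module) hlie
    obtain ha | hv := h.eq_zero_or_eq_zero_of_commute hcomm
    · rwa [ha, zero_add, eq_comm] at hsum
    · rw [show peirceLower p t = 0 from Subtype.ext hv, map_zero, map_zero]

lemma map_peirceUpper (h : IsMinimalIdempotent 𝒜 p τ) (hL : IsLieNDeriv 𝒜 (m + 2) L)
    (hc : ∀ b, Commute (L p) b) (t : 𝒜) :
    L (peirceUpper p t) = peirceUpper (p : B) (L t) := by
  have hLt := congrArg (peirceUpper (p : B)) (h.map_peirce hL hc t)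
  rw [← h.peirceLower_map_peirceLower hL hc t, map_add, map_add, map_zsmul, map_zsmul,
    peirceUpper_peirceLower h.coe_idem, peirceUpper_peirceLower h.coe_idem, add_zero, add_zero,
    peirceUpper_peirceUpper h.coe_idem, h.peirceUpper_map_peirceUpper hL hc] at hLt
  exact (isUnit_neg_one.pow _).smul_left_cancel.mp hLt

lemma map_peirceLower (h : IsMinimalIdempotent 𝒜 p τ) (hL : IsLieNDeriv 𝒜 (m + 2) L)
    (hc : ∀ b, Commute (L p) b) (t : 𝒜) :
    L (peirceLower p t) = peirceLower (p : B) (L t) := by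
  have hLt := h.map_peirce hL hc t
  rwa [h.map_peirceUpper hL hc, add_right_inj] at hLt

lemma map_lie_peirceUpper (h : IsMinimalIdempotent 𝒜 p τ) (hL : IsLieNDeriv 𝒜 (m + 2) L)
    (hc : ∀ b, Commute (L p) b) (s t : 𝒜) :
    L ⁅peirceUpper p s, t⁆ =
      ⁅peirceUpper (p : B) (L s), (t : B)⁆ + ⁅peirceUpper (p : B) s, L t⁆ := by
  have hbr := hL.map_lie_iterate_lie hc (peirceUpper p s) t
  rw [h.map_peirceUpper hL hc, coe_peirceUpper, iterate_lie_peirceUpper h.idem,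
    iterate_lie_peirceUpper h.coe_idem, iterate_lie_peirceUpper h.coe_idem] at hbr
  rw [smul_lie, smul_lie, smul_lie, ← smul_add, map_zsmul] at hbr
  exact (isUnit_neg_one.pow _).smul_left_cancel.mp hbr

lemma peirceUpper_lie_peirceUpper (h : IsMinimalIdempotent 𝒜 p τ) (x y : B) :
    peirceUpper (p : B) ⁅peirceUpper (p : B) x, y⁆ =
      peirceUpper (p : B) x * y * (1 - p) - τ y • peirceUpper (p : B) x := by
  have hyx : p * (y * peirceUpper (p : B) x) * (1 - p) = p * y * p * peirceUpper (p : B) x := by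
    rw [mul_assoc _ (p : B) (peirceUpper (p : B) x), mul_peirceUpper h.coe_idem, mul_assoc,
      mul_assoc, mul_assoc, mul_sub, mul_one, peirceUpper_mul h.coe_idem, sub_zero]
  rw [peirceUpper_apply (p : B) ⁅_, y⁆, Ring.lie_def, mul_sub (p : B), sub_mul, hyx, h.corner,
    smul_mul_assoc, mul_peirceUpper h.coe_idem, ← mul_assoc, mul_peirceUpper h.coe_idem]

lemma map_peirceUpper_mul_mul_one_sub (h : IsMinimalIdempotent 𝒜 p τ)
    (hL : IsLieNDeriv 𝒜 (m + 2) L) (hc : ∀ b, Commute (L p) b) (s t : 𝒜) :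
    L (peirceUpper p s * t * (1 - p)) =
      (peirceUpper (p : B) (L s) * t + peirceUpper (p : B) s * L t) * (1 - p) -
        τ (L t) • peirceUpper (p : B) s := by
  have hlie := congrArg (peirceUpper (p : B)) (h.map_lie_peirceUpper hL hc s t)
  have hst : peirceUpper p ⁅peirceUpper p s, t⁆ =
      peirceUpper p s * t * (1 - p) - τ t • peirceUpper p s :=
    Subtype.ext (h.peirceUpper_lie_peirceUpper s t)
  rw [← h.map_peirceUpper hL hc, hst, map_sub, map_smul, h.map_peirceUpper hL hc s, map_add,
    h.peirceUpper_lie_peirceUpper, h.peirceUpper_lie_peirceUpper] at hlie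
  rw [add_mul]
  linear_combination (norm := module) hlie

lemma peirceUpper_mul_peirceLower_eq_smul (h : IsMinimalIdempotent 𝒜 p τ) (x y : B) :
    peirceUpper (p : B) x * peirceLower (p : B) y =
      τ (peirceUpper (p : B) x * peirceLower (p : B) y) • (p : B) := by
  rw [← h.corner, ← mul_assoc, mul_peirceUpper h.coe_idem, mul_assoc, peirceLower_mul h.coe_idem]

lemma mul_map_peirceLower_mul_peirceUpper (h : IsMinimalIdempotent 𝒜 p τ)
    (hL : IsLieNDeriv 𝒜 (m + 2) L) (hc : ∀ b, Commute (L p) b) (s t : 𝒜) :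
    p * L (peirceLower p t * peirceUpper p s) =
      τ (L (peirceLower p t * peirceUpper p s)) • (p : B) := by
  have hup : peirceUpper p (peirceLower p t * peirceUpper p s) = 0 := by
    rw [peirceUpper_apply, ← mul_assoc, mul_peirceLower h.idem, zero_mul, zero_mul]
  rw [h.mul_eq_smul_add_peirceUpper, ← h.map_peirceUpper hL hc, hup, map_zero, add_zero]

lemma peirceUpper_mul_map_peirceLower_mul_peirceUpper (h : IsMinimalIdempotent 𝒜 p τ)
    (hL : IsLieNDeriv 𝒜 (m + 2) L) (hc : ∀ b, Commute (L p) b) (s t : 𝒜) :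
    peirceUpper (p : B) s * L (peirceLower p t * peirceUpper p s) =
      τ (peirceUpper (p : B) s * peirceLower (p : B) t) • peirceUpper (p : B) (L s) -
        peirceUpper (p : B) (L s) * peirceLower (p : B) t * peirceUpper (p : B) s +
        τ (L (peirceLower p t * peirceUpper p s)) • peirceUpper (p : B) s := by
  have hrow := h.map_peirceUpper_mul_mul_one_sub hL hc s (peirceLower p t * peirceUpper p s)
  have huvu : peirceUpper p s * (peirceLower p t * peirceUpper p s) * (1 - p) =
      τ (peirceUpper (p : B) s * peirceLower (p : B) t) • peirceUpper p s := by
    refine Subtype.ext ?_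
    change peirceUpper (p : B) s * (peirceLower (p : B) t * peirceUpper (p : B) s) * (1 - p) = _
    rw [mul_assoc, mul_assoc, mul_sub, mul_one, peirceUpper_mul h.coe_idem, sub_zero, ← mul_assoc]
    conv_lhs =>
      rw [h.peirceUpper_mul_peirceLower_eq_smul, smul_mul_assoc, mul_peirceUpper h.coe_idem]
    rfl
  have hlow : peirceUpper (p : B) s * L (peirceLower p t * peirceUpper p s) * p = 0 := by
    have hzero : peirceLower p (peirceLower p t * peirceUpper p s) = 0 := by
      rw [peirceLower_apply, mul_assoc, mul_assoc, peirceUpper_mul h.idem, mul_zero, mul_zero]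
    rw [mul_assoc, ← peirceUpper_mul_peirceLower h.coe_idem, ← h.map_peirceLower hL hc, hzero,
      map_zero, mul_zero]
  rw [huvu, map_smul, h.map_peirceUpper hL hc, mul_sub, mul_one, add_mul, hlow,
    MulMemClass.coe_mul, coe_peirceLower, coe_peirceUpper, ← mul_assoc,
    mul_assoc _ (peirceUpper (p : B) (s : B)) (p : B), peirceUpper_mul h.coe_idem, mul_zero] at hrow
  linear_combination (norm := module) -hrow

lemma map_lie_peirceUpper_peirceLower (h : IsMinimalIdempotent 𝒜 p τ)
    (hL : IsLieNDeriv 𝒜 (m + 2) L) (hc : ∀ b, Commute (L p) b) (s t : 𝒜) :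
    (τ (peirceUpper (p : B) s * peirceLower (p : B) t) * τ (L p)) • (1 : B) -
        L (peirceLower p t * peirceUpper p s) =
      ⁅peirceUpper (p : B) (L s), peirceLower (p : B) t⁆ +
        ⁅peirceUpper (p : B) s, peirceLower (p : B) (L t)⁆ := by
  have huv : peirceUpper p s * peirceLower p t =
      τ (peirceUpper (p : B) s * peirceLower (p : B) t) • p :=
    Subtype.ext (h.peirceUpper_mul_peirceLower_eq_smul (s : B) (t : B))
  rw [mul_smul, ← h.map_eq_smul_one hL (hc p).symm, ← map_smul, ← huv, ← map_sub, ← Ring.lie_def,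
    h.map_lie_peirceUpper hL hc, h.map_peirceLower hL hc, coe_peirceLower]

lemma map_peirceUpper_mul_add_mul_map_peirceLower (h : IsMinimalIdempotent 𝒜 p τ)
    (hL : IsLieNDeriv 𝒜 (m + 2) L) (hc : ∀ b, Commute (L p) b) (s t : 𝒜) :
    peirceUpper (p : B) (L s) * peirceLower (p : B) t +
      peirceUpper (p : B) s * peirceLower (p : B) (L t) = 0 := by
  have := IsAddTorsionFree.of_isTorsionFree ℂ B
  have hlie := h.map_lie_peirceUpper_peirceLower hL hc s t
  have hpvu := h.mul_map_peirceLower_mul_peirceUpper hL hc s t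
  have huvu := h.peirceUpper_mul_map_peirceLower_mul_peirceUpper hL hc s t
  have huv := h.peirceUpper_mul_peirceLower_eq_smul s t
  set c := τ (peirceUpper (p : B) s * peirceLower (p : B) t)
  set d := τ (L (peirceLower p t * peirceUpper p s))
  have hcorner : (c * τ (L p) - d) • (p : B) =
      peirceUpper (p : B) (L s) * peirceLower (p : B) t +
        peirceUpper (p : B) s * peirceLower (p : B) (L t) := by
    have hmul := congrArg ((p : B) * ·) hlie
    simp only [Ring.lie_def, mul_sub, mul_add, ← mul_assoc, mul_peirceUpper h.coe_idem,
      mul_peirceLower h.coe_idem, zero_mul, sub_zero, mul_smul_comm, mul_one, hpvu] at hmul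
    rw [sub_smul, hmul]
  have hdouble : 2 • (c * τ (L p) - d) • peirceUpper (p : B) s = 0 := by
    have hright := congrArg (· * peirceUpper (p : B) s) hcorner
    have hleft := congrArg (peirceUpper (p : B) s * ·) hlie
    simp only [Ring.lie_def, mul_sub, mul_add, add_mul, ← mul_assoc, smul_mul_assoc,
      peirceUpper_mul_peirceUpper h.coe_idem, zero_mul, zero_sub, mul_smul_comm, mul_one, huv,
      mul_peirceUpper h.coe_idem, huvu] at hright hleft
    linear_combination (norm := module) hleft + hright
  rw [← hcorner]
  rcases smul_eq_zero.mp ((nsmul_eq_zero_iff_right two_ne_zero).mp hdouble) with hcoeff | hu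
  · rw [hcoeff, zero_smul]
  · have hu' : peirceUpper (p : B) (L s) = 0 := by
      rw [← h.map_peirceUpper hL hc, show peirceUpper p s = 0 from Subtype.ext hu, map_zero]
    rw [hcorner, hu, hu', zero_mul, zero_mul, add_zero]

lemma map_peirceUpper_mul_add_mul_map_mul (h : IsMinimalIdempotent 𝒜 p τ)
    (hL : IsLieNDeriv 𝒜 (m + 2) L) (hc : ∀ b, Commute (L p) b) (s t : 𝒜) :
    (peirceUpper (p : B) (L s) * t + peirceUpper (p : B) s * L t) * p = 0 := by
  rw [add_mul, mul_assoc, mul_assoc, ← peirceUpper_mul_peirceLower h.coe_idem,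
    ← peirceUpper_mul_peirceLower h.coe_idem,
    h.map_peirceUpper_mul_add_mul_map_peirceLower hL hc]

lemma map_peirceUpper_mul (h : IsMinimalIdempotent 𝒜 p τ) (hL : IsLieNDeriv 𝒜 (m + 2) L)
    (hc : ∀ b, Commute (L p) b) (s t : 𝒜) :
    L (peirceUpper p s * t * (1 - p)) =
      peirceUpper (p : B) (L s) * t + peirceUpper (p : B) s * L t -
        τ (L t) • peirceUpper (p : B) s := by
  rw [h.map_peirceUpper_mul_mul_one_sub hL hc, mul_sub, mul_one,
    h.map_peirceUpper_mul_add_mul_map_mul hL hc, sub_zero]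

lemma sub_scalarPart_self (h : IsMinimalIdempotent 𝒜 p τ) (hL : IsLieNDeriv 𝒜 (m + 2) L)
    (hc : ∀ b, Commute (L p) b) : (L - scalarPart τ L) p = 0 := by
  rw [LinearMap.sub_apply, scalarPart_apply, ← h.map_eq_smul_one hL (hc p).symm, sub_self]

lemma sub_scalarPart_peirceUpper (h : IsMinimalIdempotent 𝒜 p τ) (hL : IsLieNDeriv 𝒜 (m + 2) L)
    (hc : ∀ b, Commute (L p) b) (t : 𝒜) :
    (L - scalarPart τ L) (peirceUpper p t) = peirceUpper (p : B) (L t) := by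
  rw [LinearMap.sub_apply, scalarPart_apply, h.map_peirceUpper hL hc,
    h.tau_eq_zero (by rw [mul_assoc, peirceUpper_mul h.coe_idem, mul_zero]), zero_smul, sub_zero]

lemma sub_scalarPart_peirceUpper_mul (h : IsMinimalIdempotent 𝒜 p τ)
    (hL : IsLieNDeriv 𝒜 (m + 2) L) (hc : ∀ b, Commute (L p) b) (s t : 𝒜) :
    (L - scalarPart τ L) (peirceUpper p s * t) =
      (L - scalarPart τ L) (peirceUpper p s) * t +
        peirceUpper (p : B) s * (L - scalarPart τ L) t := by
  have hcorner : peirceUpper p s * t * p = τ (peirceUpper (p : B) s * t) • p := by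
    refine Subtype.ext (Eq.trans ?_ (h.corner _))
    rw [← mul_assoc, mul_peirceUpper h.coe_idem]
    rfl
  have hsplit : peirceUpper p s * t =
      τ (peirceUpper (p : B) s * t) • p + peirceUpper p (peirceUpper p s * t) := by
    rw [← hcorner, peirceUpper_apply p (_ * t), ← mul_assoc, mul_peirceUpper h.idem]
    noncomm_ring
  have hupper : peirceUpper (p : B) (L (peirceUpper p s * t)) =
      L (peirceUpper p s * t * (1 - p)) := by
    rw [← h.map_peirceUpper hL hc, peirceUpper_apply p (_ * t), ← mul_assoc, mul_peirceUpper h.idem]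
  rw [hsplit, map_add, map_smul, h.sub_scalarPart_self hL hc, smul_zero, zero_add,
    h.sub_scalarPart_peirceUpper hL hc, hupper, h.map_peirceUpper_mul hL hc,
    h.sub_scalarPart_peirceUpper hL hc, LinearMap.sub_apply, scalarPart_apply, mul_sub,
    mul_smul_comm, mul_one, add_sub_assoc]

lemma sub_scalarPart_mul_of_mul_eq (h : IsMinimalIdempotent 𝒜 p τ)
    (hL : IsLieNDeriv 𝒜 (m + 2) L) (hc : ∀ b, Commute (L p) b) {r : 𝒜} (hr : p * r = r) (t : 𝒜) :
    (L - scalarPart τ L) (r * t) =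
      (L - scalarPart τ L) r * t + r * (L - scalarPart τ L) t := by
  have hsplit (s : 𝒜) : p * s = τ (s : B) • p + peirceUpper p s :=
    Subtype.ext (h.mul_eq_smul_add_peirceUpper s)
  have hp : (L - scalarPart τ L) (p * t) = p * (L - scalarPart τ L) t := by
    rw [hsplit, map_add, map_smul, h.sub_scalarPart_self hL hc, smul_zero, zero_add,
      h.sub_scalarPart_peirceUpper hL hc, LinearMap.sub_apply, scalarPart_apply, mul_sub,
      h.mul_eq_smul_add_peirceUpper (L t), mul_smul_comm, mul_one, add_sub_cancel_left]
  have hr' : r = τ (r : B) • p + peirceUpper p r := hr.symm.trans (hsplit r)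
  rw [hr', add_mul, smul_mul_assoc, map_add, map_add, map_smul, map_smul, hp,
    h.sub_scalarPart_self hL hc, h.sub_scalarPart_peirceUpper_mul hL hc, smul_zero, zero_add,
    AddMemClass.coe_add, SetLike.val_smul, coe_peirceUpper, add_mul, smul_mul_assoc]
  abel

lemma isDerivOn_sub_scalarPart (h : IsMinimalIdempotent 𝒜 p τ) (hL : IsLieNDeriv 𝒜 (m + 2) L)
    (hp : Commute (p : B) (L p)) : IsDerivOn 𝒜 (L - scalarPart τ L) := by
  have hc : ∀ b, Commute (L p) b := by
    rw [h.map_eq_smul_one hL hp]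
    exact fun b => (Commute.one_left b).smul_left _
  intro a b
  refine sub_eq_zero.mp (h.eq_zero_of_forall_mul_mul fun z => ?_)
  let r : 𝒜 := ⟨p * z, h.mul_mem z⟩
  have hr : p * r = r := Subtype.ext (by rw [MulMemClass.coe_mul, ← mul_assoc, h.coe_idem])
  have hr_ab := h.sub_scalarPart_mul_of_mul_eq hL hc hr (a * b)
  have hra_b := h.sub_scalarPart_mul_of_mul_eq hL hc (r := r * a) (by rw [← mul_assoc, hr]) b
  have hr_a := h.sub_scalarPart_mul_of_mul_eq hL hc hr a
  rw [mul_assoc, hr_ab, hr_a] at hra_b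
  simp only [MulMemClass.coe_mul] at hra_b
  generalize L - scalarPart τ L = δ at hra_b ⊢
  change (r : B) * _ = 0
  linear_combination (norm := noncomm_ring) hra_b

lemma commute_sub_innerDeriv (h : IsMinimalIdempotent 𝒜 p τ) (L : 𝒜 →ₗ[ℂ] B) :
    Commute (p : B) ((L - innerDeriv 𝒜 ⁅(p : B), L p⁆) p) := by
  have hp := h.coe_idem.eq
  have hpp (y : B) : (p : B) * (p * y) = p * y := by rw [← mul_assoc, hp]
  rw [commute_iff_eq, LinearMap.sub_apply, innerDeriv_apply, Ring.lie_def]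
  simp only [mul_sub, sub_mul, mul_assoc, hp, hpp]
  abel

theorem exists_isDerivOn_add_scalar [TopologicalSpace B] [IsTopologicalRing B]
    [ContinuousSMul ℂ B] (h : IsMinimalIdempotent 𝒜 p τ) (hτ : Continuous τ)
    (hL : IsLieNDeriv 𝒜 (m + 2) L) :
    ∃ D H : 𝒜 →ₗ[ℂ] B,
      IsDerivOn 𝒜 D ∧ (∀ a, ∃ c : ℂ, H a = c • (1 : B)) ∧
      (∀ a : Fin (m + 2) → 𝒜, H (commPoly (m + 2) a) = 0) ∧ L = D + H ∧
      (Continuous L → Continuous D ∧ Continuous H) := by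
  set K := innerDeriv 𝒜 ⁅(p : B), L p⁆
  have hK : IsDerivOn 𝒜 K := isDerivOn_innerDeriv _
  set H := scalarPart τ (L - K)
  have hD : IsDerivOn 𝒜 (L - H) := by
    have hδ := h.isDerivOn_sub_scalarPart (hL.sub (hK.isLieNDeriv _)) (h.commute_sub_innerDeriv L)
    rw [show L - H = (L - K - H) + K by abel]
    exact hδ.add hK
  have hHn : IsLieNDeriv 𝒜 (m + 2) H := by
    rw [← sub_sub_cancel L H]
    exact hL.sub (hD.isLieNDeriv _)
  refine ⟨L - H, H, hD, fun a => ⟨_, rfl⟩,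
    hHn.map_commPoly_eq_zero fun a b => (Commute.one_left b).smul_left _,
    (sub_add_cancel L H).symm, fun hLc => ?_⟩
  have hKc : Continuous K := (continuous_subtype_val.mul continuous_const).sub
    (continuous_const.mul continuous_subtype_val)
  have hHc : Continuous H := (hτ.comp (hLc.sub hKc)).smul continuous_const
  exact ⟨hLc.sub hHc, hHc⟩

end IsMinimalIdempotent

end MinimalIdempotent

section NestAlgebra

lemma eq_zero_or_eq_zero_of_forall_clm_mul_mul {𝕜 V : Type*} [Field 𝕜] [TopologicalSpace 𝕜]
    [IsTopologicalRing 𝕜]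
    [AddCommGroup V] [TopologicalSpace V] [IsTopologicalAddGroup V] [Module 𝕜 V]
    [ContinuousSMul 𝕜 V] [SeparatingDual 𝕜 V] (a b : V →L[𝕜] V) (hab : ∀ z, a * z * b = 0) :
    a = 0 ∨ b = 0 := by
  by_contra! hne
  obtain ⟨x, hx⟩ := ContinuousLinearMap.exists_ne_zero hne.1
  obtain ⟨y, hy⟩ := ContinuousLinearMap.exists_ne_zero hne.2
  obtain ⟨g, hg⟩ := SeparatingDual.exists_eq_one (R := 𝕜) hy
  have hy0 : a (g (b y) • x) = 0 := DFunLike.congr_fun (hab (g.smulRight x)) y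
  rw [hg, one_smul] at hy0
  exact hx hy0

variable {X : Type*} [NormedAddCommGroup X] [NormedSpace ℂ X] {𝒩 : Set (Submodule ℂ X)} {x : X}

lemma smulRight_mem_nestAlgebra (hx : x ∈ nestZeroPlus 𝒩) (f : StrongDual ℂ X) :
    f.smulRight x ∈ nestAlgebra 𝒩 := by
  intro N hN y hy
  rcases eq_or_ne N ⊥ with rfl | hne
  · rw [(Submodule.mem_bot ℂ).mp hy, map_zero]
    exact zero_mem _
  · exact N.smul_mem _ (Submodule.mem_sInf.mp hx N ⟨hN, hne⟩)

lemma isMinimalIdempotent_smulRight (hx : x ∈ nestZeroPlus 𝒩) {f : StrongDual ℂ X}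
    (hf : f x = 1) :
    IsMinimalIdempotent (nestAlgebra 𝒩) ⟨f.smulRight x, smulRight_mem_nestAlgebra hx f⟩
      (f ∘L ContinuousLinearMap.apply ℂ X x : StrongDual ℂ (X →L[ℂ] X)) where
  prime := eq_zero_or_eq_zero_of_forall_clm_mul_mul
  idem := by
    refine Subtype.ext (ContinuousLinearMap.ext fun y => ?_)
    simp [hf]
  ne_zero := by
    intro hzero
    have hfx := congrArg (fun T : X →L[ℂ] X => f (T x)) (congrArg Subtype.val hzero)
    simp [hf] at hfx
  corner y := by
    ext v
    simp [smul_smul, mul_comm]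
  mul_mem y := by
    have hmul : f.smulRight x * y = (f ∘L y).smulRight x := rfl
    rw [hmul]
    exact smulRight_mem_nestAlgebra hx _

end NestAlgebra

theorem statement17_general {X : Type*} [NormedAddCommGroup X] [NormedSpace ℂ X]
    (𝒩 : Set (Submodule ℂ X)) (h0p : ⊥ < nestZeroPlus 𝒩) (n : ℕ) (hn : 2 ≤ n)
    (L : ↥(nestAlgebra 𝒩) →ₗ[ℂ] (X →L[ℂ] X)) (hL : IsLieNDeriv (nestAlgebra 𝒩) n L) :
    ∃ D H : ↥(nestAlgebra 𝒩) →ₗ[ℂ] (X →L[ℂ] X),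
      IsDerivOn (nestAlgebra 𝒩) D ∧
      (∀ a : ↥(nestAlgebra 𝒩), ∃ c : ℂ, H a = c • (1 : X →L[ℂ] X)) ∧
      (∀ a : Fin n → ↥(nestAlgebra 𝒩), H (commPoly n a) = 0) ∧
      L = D + H ∧ (Continuous L → Continuous D ∧ Continuous H) := by
  obtain ⟨x, hx, hx0⟩ := (Submodule.ne_bot_iff _).mp h0p.ne'
  obtain ⟨f, hf⟩ := SeparatingDual.exists_eq_one (R := ℂ) hx0
  obtain ⟨m, rfl⟩ := Nat.exists_eq_add_of_le' hn
  exact (isMinimalIdempotent_smulRight hx hf).exists_isDerivOn_add_scalar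
    (ContinuousLinearMap.continuous _) hL

/-- (Corollary 3.16 of the paper.)  Let `X` be a complex Banach space
with `dim X > 2` and `𝒩` a non-trivial nest on `X` with `{0} ⊊ {0}₊`.  Then every Lie
`n`-derivation `L : Alg 𝒩 → B(X)` (`n ≥ 2`) decomposes as `L = D + H` with `D` a
derivation and `H` a linear map into `ℂ I` vanishing on all `(n-1)`-th commutators;
moreover, if `L` is continuous then `D, H` can be chosen continuous. -/
theorem statement17 {X : Type*} [NormedAddCommGroup X] [NormedSpace ℂ X] [CompleteSpace X]
    (hdim : 2 < Module.rank ℂ X)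
    (𝒩 : Set (Submodule ℂ X)) (hnest : IsNest 𝒩)
    (hnontrivial : 𝒩 ≠ ({⊥, ⊤} : Set (Submodule ℂ X)))
    (h0p : ⊥ < nestZeroPlus 𝒩)
    (n : ℕ) (hn : 2 ≤ n)
    (L : ↥(nestAlgebra 𝒩) →ₗ[ℂ] (X →L[ℂ] X))
    (hL : IsLieNDeriv (nestAlgebra 𝒩) n L) :
    (∃ D H : ↥(nestAlgebra 𝒩) →ₗ[ℂ] (X →L[ℂ] X),
        IsDerivOn (nestAlgebra 𝒩) D ∧
        (∀ a : ↥(nestAlgebra 𝒩), ∃ c : ℂ, H a = c • (1 : X →L[ℂ] X)) ∧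
        (∀ a : Fin n → ↥(nestAlgebra 𝒩), H (commPoly n a) = 0) ∧
        L = D + H) ∧
    (Continuous L →
      ∃ D H : ↥(nestAlgebra 𝒩) →ₗ[ℂ] (X →L[ℂ] X),
        IsDerivOn (nestAlgebra 𝒩) D ∧
        (∀ a : ↥(nestAlgebra 𝒩), ∃ c : ℂ, H a = c • (1 : X →L[ℂ] X)) ∧
        (∀ a : Fin n → ↥(nestAlgebra 𝒩), H (commPoly n a) = 0) ∧
        L = D + H ∧ Continuous D ∧ Continuous H) := by
  obtain ⟨D, H, hD, hH, hHn, hLDH, hcont⟩ := statement17_general 𝒩 h0p n hn L hL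
  exact ⟨⟨D, H, hD, hH, hHn, hLDH⟩, fun hLc => ⟨D, H, hD, hH, hHn, hLDH, hcont hLc⟩⟩
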